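/- arXiv:2410.14472 — 6 statements merged into one kernel-verified Lean document; each statement's English description precedes it below -/
import Mathlib

section
/- Let n ≥ 1, let Σ ∈ ℝ^{4n×4n} be symmetric with 2n×2n blocks Σ = [[σ_AA, σ_AA'],[σ_A'A, σ_A'A']] and suppose Σ ⪰ ±(i/2)Ω. Let K, α ∈ ℝ^{2n×2n} with α symmetric, and suppose α ⪰ ±(i/2)(Δ − K·Δ·Kᵀ), i.e. both Hermitian matrices α ∓ (i/2)(Δ − K·Δ·Kᵀ) are positive semidefinite. Then the matrix Σ' = [[K·σ_AA·Kᵀ + α, K·σ_AA'],[σ_A'A·Kᵀ, σ_A'A']] satisfies Σ' ⪰ ±(i/2)Ω, i.e. both Σ' − (i/2)Ω and Σ' + (i/2)Ω are positive semidefinite. -/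
/-! The relation `M ⪰ ± (i/2) J` is preserved by real congruences
`(M, J) ↦ (L * M * Lᵀ, L * J * Lᵀ)` with `L` possibly rectangular (`GeI.congr_real`), and by sums
(`GeI.add`). With `L = K ⊕ 1` the hypothesis on `Σ` gives
`L * Σ * Lᵀ ⪰ ± (i/2) (K * Δ * Kᵀ ⊕ Δ)`, and with the embedding `E = [1; 0]` of the first block the
hypothesis on `α` gives `α ⊕ 0 ⪰ ± (i/2) ((Δ - K * Δ * Kᵀ) ⊕ 0)`. In the sum the terms
`K * Δ * Kᵀ` cancel, leaving `Σ' ⪰ ± (i/2) (Δ ⊕ Δ)`. -/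

open Matrix ComplexOrder

/-- The standard `2n × 2n` symplectic form: block-diagonal with `n` copies of `[[0,1],[-1,0]]`. -/
def symplJ (n : ℕ) : Matrix (Fin (2*n)) (Fin (2*n)) ℝ :=
  Matrix.of fun i j =>
    if (i : ℕ) + 1 = (j : ℕ) ∧ (i : ℕ) % 2 = 0 then 1
    else if (j : ℕ) + 1 = (i : ℕ) ∧ (j : ℕ) % 2 = 0 then -1 else 0

/-- `Ω = Δ ⊕ Δ`, the `4n × 4n` symplectic form. -/
def symplOmega (n : ℕ) : Matrix (Fin (2*n) ⊕ Fin (2*n)) (Fin (2*n) ⊕ Fin (2*n)) ℝ :=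
  Matrix.fromBlocks (symplJ n) 0 0 (symplJ n)

/-- View a real matrix as a complex matrix. -/
def toC {m : Type*} (M : Matrix m m ℝ) : Matrix m m ℂ := M.map Complex.ofReal

/-- `M ⪰ ± (i/2) J₀` : both `M - (i/2) J₀` and `M + (i/2) J₀` are positive semidefinite
as complex matrices. -/
def GeI {m : Type*} [Fintype m] (M J₀ : Matrix m m ℝ) : Prop :=
  (toC M - (Complex.I / 2) • toC J₀).PosSemidef ∧
  (toC M + (Complex.I / 2) • toC J₀).PosSemidef

lemma toC_add {m : Type*} (M N : Matrix m m ℝ) : toC (M + N) = toC M + toC N := by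
  ext i j
  simp [toC]

lemma toC_congr_real {m p : Type*} [Fintype m] (M : Matrix m m ℝ) (L : Matrix p m ℝ) :
    toC (L * M * Lᵀ) = L.map Complex.ofReal * toC M * (L.map Complex.ofReal)ᴴ := by
  ext i j
  simp [toC, Matrix.mul_apply]

lemma GeI.congr_real {m p : Type*} [Fintype m] [Fintype p] {M J : Matrix m m ℝ}
    (h : GeI M J) (L : Matrix p m ℝ) : GeI (L * M * Lᵀ) (L * J * Lᵀ) := by
  constructor
  · have h1 := h.1.mul_mul_conjTranspose_same (L.map Complex.ofReal)
    rw [toC_congr_real, toC_congr_real]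
    simpa only [Matrix.mul_sub, Matrix.sub_mul, Matrix.mul_smul, Matrix.smul_mul] using h1
  · have h2 := h.2.mul_mul_conjTranspose_same (L.map Complex.ofReal)
    rw [toC_congr_real, toC_congr_real]
    simpa only [Matrix.mul_add, Matrix.add_mul, Matrix.mul_smul, Matrix.smul_mul] using h2

lemma GeI.add {m : Type*} [Fintype m] {M N J J' : Matrix m m ℝ}
    (h : GeI M J) (h' : GeI N J') : GeI (M + N) (J + J') := by
  constructor
  · have h1 := h.1.add h'.1
    rw [toC_add, toC_add, smul_add]
    convert h1 using 1
    abel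
  · have h2 := h.2.add h'.2
    rw [toC_add, toC_add, smul_add]
    convert h2 using 1
    abel

theorem stmt0 (n : ℕ) (hn : 1 ≤ n)
    (σAA σAA' σA'A σA'A' K α : Matrix (Fin (2*n)) (Fin (2*n)) ℝ)
    (hsym : (Matrix.fromBlocks σAA σAA' σA'A σA'A').IsSymm)
    (hSig : GeI (Matrix.fromBlocks σAA σAA' σA'A σA'A') (symplOmega n))
    (hαsym : α.IsSymm)
    (hα : GeI α (symplJ n - K * symplJ n * Kᵀ)) :
    GeI (Matrix.fromBlocks (K * σAA * Kᵀ + α) (K * σAA') (σA'A * Kᵀ) σA'A')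
      (symplOmega n) := by
  have h1 := hSig.congr_real
    (Matrix.fromBlocks K 0 0 (1 : Matrix (Fin (2*n)) (Fin (2*n)) ℝ))
  have h2 := hα.congr_real (Matrix.fromRows (1 : Matrix (Fin (2*n)) (Fin (2*n)) ℝ)
    (0 : Matrix (Fin (2*n)) (Fin (2*n)) ℝ))
  have h3 := h1.add h2
  convert h3 using 1
  · simp only [Matrix.fromBlocks_multiply, Matrix.fromBlocks_transpose, Matrix.transpose_fromRows,
      Matrix.fromRows_mul, Matrix.mul_fromCols]
    ext (i | i) (j | j) <;> simp
  · simp only [symplOmega, Matrix.fromBlocks_multiply, Matrix.fromBlocks_transpose,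
      Matrix.transpose_fromRows, Matrix.fromRows_mul, Matrix.mul_fromCols]
    ext (i | i) (j | j) <;> simp
end

section
/- Let n ≥ 1 and let Σ' ∈ ℝ^{4n×4n} be symmetric with Σ' ⪰ ±(i/2)Ω. Assume that the only symmetric positive semidefinite δ ∈ ℝ^{2n×2n} such that Σ' − (δ ⊕ 0_{2n}) ⪰ ±(i/2)Ω (where δ ⊕ 0_{2n} denotes the 4n×4n block-diagonal matrix with blocks δ and the zero 2n×2n matrix) is δ = 0. Then the complex matrix Σ' + (i/2)Ω has rank at most 3n (equivalently, Σ' has at least n symplectic eigenvalues equal to 1/2). -/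
/-!
Write `P = Σ' + (i/2)Ω ⪰ 0`. If `rank P > 3n`, then the range of `P` has real dimension at least
`6n + 2` inside the real `8n`-dimensional space `ℂ^{4n}`, so it meets the real `2n`-dimensional
subspace `{(v, 0) : v ∈ ℝ^{2n}}` in a nonzero vector `(v, 0) = P u`
(`exists_real_vec_mem_range`). A vector in the range of a positive semidefinite matrix can be split
off with a small positive weight (`exists_sub_rankOne_posSemidef`), so
`Σ' - ε (v vᵀ ⊕ 0) + (i/2)Ω ⪰ 0` for some `ε > 0`. Entrywise complex conjugation gives the same with
`-(i/2)Ω`, and `δ = ε v vᵀ ≠ 0` contradicts minimality.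
-/

open Matrix ComplexOrder

/-- For a real matrix `M`, the condition `M ⪰ ±(i/2)J₀` follows from its `+` half, because
the two complex matrices are entrywise conjugates of each other. -/
lemma GeI.of_add {m : Type*} [Fintype m] {M J₀ : Matrix m m ℝ}
    (h : (toC M + (Complex.I / 2) • toC J₀).PosSemidef) : GeI M J₀ := by
  refine ⟨?_, h⟩
  have h2 := h.transpose
  rw [← h.isHermitian.eq] at h2
  have e : toC M - (Complex.I / 2) • toC J₀ = (toC M + (Complex.I / 2) • toC J₀)ᴴᵀ := by
    ext i j
    simp [toC, sub_eq_add_neg, neg_div]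
  rw [e]
  exact h2

/-- With `c = u* P u` and `a = 1/(1+c)`, the congruence of `P` by `1 - a u u* P` equals
`P - (2a - a²c) (P u)(P u)*`, and `2a - a²c > 0`. -/
lemma exists_sub_rankOne_posSemidef {m : Type*} [Fintype m] [DecidableEq m] {P : Matrix m m ℂ}
    (hP : P.PosSemidef) (u : m → ℂ) :
    ∃ ε : ℝ, 0 < ε ∧
      (P - (ε : ℂ) • vecMulVec (P *ᵥ u) (star (P *ᵥ u))).PosSemidef := by
  obtain ⟨c, hc0, hc⟩ : ∃ c : ℝ, 0 ≤ c ∧ star u ⬝ᵥ (P *ᵥ u) = (c : ℂ) := by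
    have h := hP.dotProduct_mulVec_nonneg u
    obtain ⟨h1, h2⟩ := Complex.nonneg_iff.mp h
    exact ⟨_, h1, Complex.ext (by simp) (by simp [← h2])⟩
  set a : ℝ := 1 / (1 + c) with ha
  have hpos : 0 < 1 + c := by linarith
  refine ⟨2 * a - a ^ 2 * c, ?_, ?_⟩
  · have : 2 * a - a ^ 2 * c = (2 + c) / (1 + c) ^ 2 := by
      rw [ha]; field_simp; ring
    rw [this]; positivity
  · have key := hP.conjTranspose_mul_mul_same
      (1 - (a : ℂ) • vecMulVec u (star (P *ᵥ u)))
    convert key using 1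
    have hstar : star (P *ᵥ u) = star u ᵥ* P := by
      rw [star_mulVec, hP.isHermitian.eq]
    have e1 : P * vecMulVec u (star (P *ᵥ u)) = vecMulVec (P *ᵥ u) (star (P *ᵥ u)) :=
      mul_vecMulVec _ _ _
    have e2 : vecMulVec (P *ᵥ u) (star u) * P = vecMulVec (P *ᵥ u) (star (P *ᵥ u)) := by
      rw [vecMulVec_mul, hstar]
    have e3 : vecMulVec (P *ᵥ u) (star u) * vecMulVec (P *ᵥ u) (star (P *ᵥ u))
        = (c : ℂ) • vecMulVec (P *ᵥ u) (star (P *ᵥ u)) := by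
      rw [vecMulVec_mul_vecMulVec, hc]
      ext i j
      simp [vecMulVec_apply]
      ring
    have e3' : vecMulVec (P *ᵥ u) (star (P *ᵥ u)) * vecMulVec u (star (P *ᵥ u))
        = (c : ℂ) • vecMulVec (P *ᵥ u) (star (P *ᵥ u)) := by
      rw [← e3, ← e1, ← mul_assoc, e2, e1]
    have e4 : (1 - (a : ℂ) • vecMulVec u (star (P *ᵥ u)))ᴴ
        = 1 - (a : ℂ) • vecMulVec (P *ᵥ u) (star u) := by
      simp [conjTranspose_sub, conjTranspose_smul, conjTranspose_vecMulVec]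
    rw [e4, sub_mul, one_mul, smul_mul_assoc, e2, mul_sub, mul_one, mul_smul_comm, sub_mul, e1,
      smul_mul_assoc, e3']
    push_cast
    module

/-- The embedding `v ↦ (v, 0)` of `ℝ^p` into `ℂ^p ⊕ ℂ^q`, as a real-linear map. -/
def realInl (p q : Type*) : (p → ℝ) →ₗ[ℝ] (p ⊕ q → ℂ) where
  toFun v := Sum.elim (fun i => (v i : ℂ)) 0
  map_add' v w := by ext (i | i) <;> simp
  map_smul' r v := by ext (i | i) <;> simp

/-- Real dimension count: `2 (3n + 1) + 2n > 8n`. -/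
lemma exists_real_vec_mem_range {n : ℕ}
    (P : Matrix (Fin (2*n) ⊕ Fin (2*n)) (Fin (2*n) ⊕ Fin (2*n)) ℂ) (hP : 3 * n < P.rank) :
    ∃ v : Fin (2*n) → ℝ, v ≠ 0 ∧ ∃ u, P *ᵥ u = realInl _ _ v := by
  by_contra! hcon
  have hinj : Function.Injective (realInl (Fin (2*n)) (Fin (2*n))) := by
    intro v w h
    ext i
    simpa [realInl] using congrFun h (Sum.inl i)
  let R := (LinearMap.range P.mulVecLin).restrictScalars ℝ
  let S := LinearMap.range (realInl (Fin (2*n)) (Fin (2*n)))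
  have hdisj : Disjoint R S := by
    rw [Submodule.disjoint_def]
    rintro x ⟨u, hu⟩ ⟨v, rfl⟩
    by_cases hv : v = 0
    · simp [hv]
    · exact absurd hu (hcon v hv u)
  have hle := Submodule.finrank_add_finrank_le_of_disjoint hdisj
  have hR : Module.finrank ℝ R = 2 * P.rank :=
    finrank_real_of_complex (LinearMap.range P.mulVecLin)
  have hS : Module.finrank ℝ S = 2 * n := by
    rw [LinearMap.finrank_range_of_inj hinj]; simp
  have hT : Module.finrank ℝ (Fin (2*n) ⊕ Fin (2*n) → ℂ) = 2 * (2 * n + 2 * n) := by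
    rw [finrank_real_of_complex]; simp
  omega

theorem stmt3 (n : ℕ) (hn : 1 ≤ n)
    (Sg : Matrix (Fin (2*n) ⊕ Fin (2*n)) (Fin (2*n) ⊕ Fin (2*n)) ℝ)
    (hsym : Sg.IsSymm)
    (hSig : GeI Sg (symplOmega n))
    (hmin : ∀ δ : Matrix (Fin (2*n)) (Fin (2*n)) ℝ, δ.PosSemidef →
      GeI (Sg - Matrix.fromBlocks δ 0 0 0) (symplOmega n) → δ = 0) :
    (toC Sg + (Complex.I / 2) • toC (symplOmega n)).rank ≤ 3*n := by
  by_contra! hlt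
  obtain ⟨v, hv, u, hu⟩ := exists_real_vec_mem_range _ hlt
  obtain ⟨ε, hε, hpsd⟩ := exists_sub_rankOne_posSemidef hSig.2 u
  rw [hu] at hpsd
  have hδ : (ε • vecMulVec v v).PosSemidef := by
    simpa using (posSemidef_vecMulVec_self_star v).smul hε.le
  have h0 := hmin _ hδ (GeI.of_add (by
    convert hpsd using 1
    ext (i | i) (j | j) <;> simp [toC, realInl, vecMulVec_apply] <;> ring))
  apply hv
  ext i
  simpa [vecMulVec_apply, hε.ne'] using congrFun (congrFun h0 i) i
end

section
/- Let n ≥ 1 and let V be a ℂ-linear subspace of ℂ^{2n} with dim_ℂ V ≥ n + 1. Then V contains a nonzero vector all of whose coordinates are real. -/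
/-- Taking imaginary parts coordinatewise is an `ℝ`-linear map `V → ℝ^{2n}`. Its source has real
dimension `2 * dim_ℂ V ≥ 2n + 2`, so its kernel, the set of real vectors in `V`, is nonzero. -/
theorem stmt4 (n : ℕ) (hn : 1 ≤ n) (V : Submodule ℂ (Fin (2*n) → ℂ))
    (hV : n + 1 ≤ Module.finrank ℂ V) :
    ∃ v ∈ V, v ≠ 0 ∧ ∀ i, (v i).im = 0 := by
  let f : V →ₗ[ℝ] (Fin (2*n) → ℝ) :=
    { toFun := fun v i => ((v : Fin (2*n) → ℂ) i).im
      map_add' := fun v w => by ext i; simp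
      map_smul' := fun r v => by ext i; simp }
  have hdim : Module.finrank ℝ V = 2 * Module.finrank ℂ V :=
    finrank_real_of_complex V
  haveI : FiniteDimensional ℝ V := FiniteDimensional.complexToReal V
  have hker : LinearMap.ker f ≠ ⊥ := by
    apply LinearMap.ker_ne_bot_of_finrank_lt
    rw [hdim, Module.finrank_fin_fun]
    omega
  obtain ⟨v, hv, hv0⟩ := Submodule.exists_mem_ne_zero_of_ne_bot hker
  exact ⟨v, v.2, fun h => hv0 (Subtype.ext h), fun i => congrFun hv i⟩
end

section
/- Let 0 < η < 1. Then lim_{t→∞} [ g((1 − η + 2t(1 + η))/4) − g((1 + 2t(1 − η) + η)/4) ] = ln((1 + η)/(1 − η)), where the limit is taken as t → +∞ over the reals. -/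
/-!
As `x → ∞`, `g(x) - ln x = x ln (1 + 1/x) + ln (1 + 1/x) → 1`. Both arguments of `g` are affine
in `t` with positive slopes `(1 + η)/2` and `(1 - η)/2`, so the difference of the two values of `g`
has the same limit as the logarithm of the quotient of the arguments, namely the logarithm of
the quotient of the slopes.
-/

/-- The bosonic entropy function `g(x) = (x+1) ln(x+1) - x ln x`. -/
noncomputable def bosonicG (x : ℝ) : ℝ := (x + 1) * Real.log (x + 1) - x * Real.log x

open Filter Topology

lemma bosonicG_sub_log_tendsto :
    Tendsto (fun x : ℝ => bosonicG x - Real.log x) atTop (𝓝 1) := by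
  have h1 : Tendsto (fun x : ℝ => x * Real.log (1 + 1 / x)) atTop (𝓝 1) :=
    Real.tendsto_mul_log_one_add_div_atTop 1
  have h2 : Tendsto (fun x : ℝ => Real.log (1 + 1 / x)) atTop (𝓝 0) := by
    have h3 : Tendsto (fun x : ℝ => 1 + 1 / x) atTop (𝓝 1) := by
      simpa using tendsto_inv_atTop_zero.const_add (1 : ℝ)
    simpa using h3.log one_ne_zero
  have h4 := h1.add h2
  rw [add_zero] at h4
  refine h4.congr' ?_
  filter_upwards [eventually_gt_atTop 0] with x hx
  have h5 : Real.log (1 + 1 / x) = Real.log (x + 1) - Real.log x := by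
    rw [← Real.log_div (by positivity) hx.ne']
    congr 1
    field_simp
  rw [h5, bosonicG]
  ring

lemma affine_tendsto_atTop {m : ℝ} (hm : 0 < m) (c : ℝ) :
    Tendsto (fun t : ℝ => m * t + c) atTop atTop :=
  tendsto_atTop_add_const_right _ _ (tendsto_id.const_mul_atTop hm)

lemma affine_div_tendsto (m c : ℝ) :
    Tendsto (fun t : ℝ => (m * t + c) / t) atTop (𝓝 m) := by
  have h : Tendsto (fun t : ℝ => m + c * t⁻¹) atTop (𝓝 m) := by
    simpa using (tendsto_inv_atTop_zero.const_mul c).const_add m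
  refine h.congr' ?_
  filter_upwards [eventually_gt_atTop 0] with t ht
  field_simp

lemma bosonicG_affine_sub_tendsto {m n : ℝ} (hm : 0 < m) (hn : 0 < n) (c d : ℝ) :
    Tendsto (fun t : ℝ => bosonicG (m * t + c) - bosonicG (n * t + d)) atTop
      (𝓝 (Real.log (m / n))) := by
  have ha := affine_tendsto_atTop hm c
  have hb := affine_tendsto_atTop hn d
  have hlog := ((affine_div_tendsto m c).div (affine_div_tendsto n d) hn.ne').log
    (div_pos hm hn).ne'
  have h := ((bosonicG_sub_log_tendsto.comp ha).sub (bosonicG_sub_log_tendsto.comp hb)).add hlog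
  rw [sub_self, zero_add] at h
  refine h.congr' ?_
  filter_upwards [eventually_gt_atTop 0, ha.eventually_gt_atTop 0, hb.eventually_gt_atTop 0]
    with t ht hat hbt
  simp only [Function.comp_apply, Pi.div_apply]
  rw [div_div_div_cancel_right₀ ht.ne', Real.log_div hat.ne' hbt.ne']
  ring

theorem stmt12 (η : ℝ) (h0 : 0 < η) (h1 : η < 1) :
    Filter.Tendsto
      (fun t : ℝ => bosonicG ((1 - η + 2*t*(1 + η))/4) - bosonicG ((1 + 2*t*(1 - η) + η)/4))
      Filter.atTop (nhds (Real.log ((1 + η)/(1 - η)))) := by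
  have h := bosonicG_affine_sub_tendsto (m := (1 + η) / 2) (n := (1 - η) / 2)
    (by linarith) (by linarith) ((1 - η) / 4) ((1 + η) / 4)
  rw [div_div_div_cancel_right₀ two_ne_zero] at h
  refine h.congr fun t => ?_
  congr 2 <;> ring
end

section
/- Let 0 < η < 1 and N > 0, and set κ' := (N + 1)/((1 − η)N + 1) (so κ' ≥ 1). Define the 4×4 real matrices σ_CD := [[(N + 1/2)·I₂, √(η·N(N+1))·Z₂],[√(η·N(N+1))·Z₂, (η·N + 1/2)·I₂]] and S := [[√κ'·I₂, −√(κ'−1)·Z₂],[−√(κ'−1)·Z₂, √κ'·I₂]]. Then S is symplectic with respect to Ω = Δ ⊕ Δ, i.e. S·Ω·Sᵀ = Ω, and the matrix S·σ_CD·Sᵀ is diagonal. -/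
/-!
Writing `a = √κ'` and `b = √(κ' - 1)`, the symplectic identity follows from `a² - b² = 1` and
`Z₂ Δ Z₂ = -Δ`. In `S σ_CD Sᵀ` the diagonal blocks are multiples of `I₂`, and the off-diagonal
blocks are `(c (a² + b²) - a b (N + 1 + η N)) Z₂` with `c = √(η N (N + 1))`; the value of `κ'` is
exactly the one that makes this coefficient vanish (`offDiag_coeff`).
-/

open Matrix

/-- The 2×2 symplectic form `Δ = [[0,1],[-1,0]]`. -/
def Delta2 : Matrix (Fin 2) (Fin 2) ℝ := !![0, 1; -1, 0]

/-- `Z₂ = diag(1,-1)`. -/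
def Z2 : Matrix (Fin 2) (Fin 2) ℝ := !![1, 0; 0, -1]

/-- The 4×4 symplectic form `Ω = Δ ⊕ Δ`. -/
def Omega2 : Matrix (Fin 2 ⊕ Fin 2) (Fin 2 ⊕ Fin 2) ℝ :=
  Matrix.fromBlocks Delta2 0 0 Delta2

/-- The covariance matrix `σ_CD(N)` of a two-mode squeezed vacuum with `N` mean photons per
mode, sent through a pure-loss attenuator of transmissivity `η` on its second mode. -/
noncomputable def sigmaCD (η N : ℝ) : Matrix (Fin 2 ⊕ Fin 2) (Fin 2 ⊕ Fin 2) ℝ :=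
  Matrix.fromBlocks
    ((N + 1/2) • (1 : Matrix (Fin 2) (Fin 2) ℝ))
    (Real.sqrt (η * N * (N + 1)) • Z2)
    (Real.sqrt (η * N * (N + 1)) • Z2)
    ((η * N + 1/2) • (1 : Matrix (Fin 2) (Fin 2) ℝ))

/-- The symplectic matrix `S = [[√κ'·I₂, −√(κ'−1)·Z₂],[−√(κ'−1)·Z₂, √κ'·I₂]]`. -/
noncomputable def Smat (κ' : ℝ) : Matrix (Fin 2 ⊕ Fin 2) (Fin 2 ⊕ Fin 2) ℝ :=
  Matrix.fromBlocks
    (Real.sqrt κ' • (1 : Matrix (Fin 2) (Fin 2) ℝ))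
    (-(Real.sqrt (κ' - 1)) • Z2)
    (-(Real.sqrt (κ' - 1)) • Z2)
    (Real.sqrt κ' • (1 : Matrix (Fin 2) (Fin 2) ℝ))

/-- With `D = (1 - η) N + 1`, both sides equal `√(η N (N + 1)) (N + 1 + η N) / D`, because
`κ' = (N + 1) / D` and `κ' - 1 = η N / D`. This is the vanishing of the coefficient of `Z₂` in
the off-diagonal block of `S σ_CD Sᵀ`. -/
lemma offDiag_coeff (η N κ' : ℝ) (hη0 : 0 < η) (hη1 : η < 1) (hN : 0 < N)
    (hκ' : κ' = (N + 1) / ((1 - η) * N + 1)) :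
    Real.sqrt κ' * Real.sqrt (κ' - 1) * (N + 1 + η * N)
      = Real.sqrt (η * N * (N + 1)) * (κ' + (κ' - 1)) := by
  obtain ⟨D, hDdef⟩ : ∃ D, D = (1 - η) * N + 1 := ⟨_, rfl⟩
  have hD : 0 < D := by
    have := mul_pos (sub_pos.mpr hη1) hN
    linarith
  rw [← hDdef] at hκ'
  have hηN : η * N = N + 1 - D := by rw [hDdef]; ring
  have hκ0 : 0 ≤ κ' := by rw [hκ']; positivity
  have hprod : Real.sqrt κ' * Real.sqrt (κ' - 1) = Real.sqrt (η * N * (N + 1)) / D := by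
    rw [← Real.sqrt_mul hκ0, eq_div_iff hD.ne']
    rw [show Real.sqrt (κ' * (κ' - 1)) * D = Real.sqrt (κ' * (κ' - 1)) * Real.sqrt (D ^ 2) by
      rw [Real.sqrt_sq hD.le],
      ← Real.sqrt_mul' _ (sq_nonneg D), hκ', hηN]
    congr 1
    field_simp
  rw [hprod, hκ', hηN]
  field_simp

theorem stmt14 (η N κ' : ℝ) (hη0 : 0 < η) (hη1 : η < 1) (hN : 0 < N)
    (hκ' : κ' = (N + 1) / ((1 - η) * N + 1)) :
    Smat κ' * Omega2 * (Smat κ')ᵀ = Omega2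
    ∧ (Smat κ' * sigmaCD η N * (Smat κ')ᵀ).IsDiag := by
  have hD : 0 < (1 - η) * N + 1 := by
    have := mul_pos (sub_pos.mpr hη1) hN
    linarith
  have hκ1 : 0 ≤ κ' - 1 := by
    rw [hκ', sub_nonneg, one_le_div hD]
    linarith [mul_pos hη0 hN]
  have ha := Real.mul_self_sqrt (by linarith : 0 ≤ κ')
  have hb := Real.mul_self_sqrt hκ1
  have hoff := offDiag_coeff η N κ' hη0 hη1 hN hκ'
  constructor
  · unfold Smat Omega2 Z2 Delta2
    generalize Real.sqrt κ' = a at *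
    generalize Real.sqrt (κ' - 1) = b at *
    ext i j
    rcases i with i | i <;> rcases j with j | j <;> fin_cases i <;> fin_cases j <;>
      simp [Matrix.mul_apply, Matrix.one_apply] <;> linarith
  · unfold Smat sigmaCD Z2
    generalize Real.sqrt κ' = a at *
    generalize Real.sqrt (κ' - 1) = b at *
    generalize Real.sqrt (η * N * (N + 1)) = c at *
    -- Replacing `κ'` and `κ' - 1` by `a²` and `b²` makes the key identity polynomial in the entries.
    rw [← hb, ← ha] at hoff
    intro i j hij
    rcases i with i | i <;> rcases j with j | j <;> fin_cases i <;> fin_cases j <;>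
      simp [Matrix.mul_apply, Matrix.one_apply] at hij ⊢ <;> linarith
end

section
/- Let 0 ≤ η ≤ 1 and t ≥ 1/2. Define the 4×4 real matrix σ(t) := [[a(t)·I₂, b(t)·I₂],[b(t)·I₂, d(t)·I₂]], where a(t) = η(t − 1/2) + 1/2, b(t) = √((1−η)η)·(1 − 2t)/(2√2), and d(t) = (η + 2(1−η)t + 1)/4, and set ν(t) := (1 − η + 2t(1 + η))/4. Then the characteristic polynomial of the 4×4 real matrix ((Δ ⊕ Δ)·σ(t))² equals (X + 1/4)²·(X + ν(t)²)²; equivalently, the symplectic eigenvalues of σ(t) are 1/2 and ν(t), each with multiplicity one as a pair. -/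
/-!
Both factors of `Ω σ` are built from blocks commuting with `Δ`, and `Δ² = -1`, so `(Ω σ)²` is
`-(M² ⊗ I₂)` with `M = [[a, b], [b, d]]` the 2×2 matrix of scalar coefficients of `σ`. Hence its
characteristic polynomial is the square of `(X + a² + b²)(X + b² + d²) - (b (a + d))²`. This
quadratic factors as `(X + 1/4)(X + ν²)` because `M` has trace `1/2 + ν` and determinant `ν/2`,
i.e. eigenvalues `1/2` and `ν`.
-/

open Matrix Polynomial

/-- The covariance matrix `σ_{BE''}(t)` for the attenuator with transmissivity `η`. -/
noncomputable def sigmaBE (η t : ℝ) : Matrix (Fin 2 ⊕ Fin 2) (Fin 2 ⊕ Fin 2) ℝ :=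
  Matrix.fromBlocks
    ((η * (t - 1/2) + 1/2) • (1 : Matrix (Fin 2) (Fin 2) ℝ))
    ((Real.sqrt ((1 - η) * η) * (1 - 2*t) / (2 * Real.sqrt 2)) • (1 : Matrix (Fin 2) (Fin 2) ℝ))
    ((Real.sqrt ((1 - η) * η) * (1 - 2*t) / (2 * Real.sqrt 2)) • (1 : Matrix (Fin 2) (Fin 2) ℝ))
    (((η + 2*(1 - η)*t + 1)/4) • (1 : Matrix (Fin 2) (Fin 2) ℝ))

/-- For scalar blocks `p, q, q, r` the matrix is `[[p, q], [q, r]] ⊗ I₂`, so its characteristic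
polynomial is the square of that of the 2×2 factor. -/
lemma charpoly_fromBlocks_smul_one (p q r : ℝ) :
    (Matrix.fromBlocks (p • (1 : Matrix (Fin 2) (Fin 2) ℝ)) (q • (1 : Matrix (Fin 2) (Fin 2) ℝ))
      (q • (1 : Matrix (Fin 2) (Fin 2) ℝ)) (r • (1 : Matrix (Fin 2) (Fin 2) ℝ))).charpoly
      = ((X - C p) * (X - C r) - C q ^ 2) ^ 2 := by
  have h : Matrix.reindex finSumFinEquiv finSumFinEquiv
      (Matrix.fromBlocks (p • (1 : Matrix (Fin 2) (Fin 2) ℝ)) (q • (1 : Matrix (Fin 2) (Fin 2) ℝ))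
        (q • (1 : Matrix (Fin 2) (Fin 2) ℝ)) (r • (1 : Matrix (Fin 2) (Fin 2) ℝ)))
      = !![p, 0, q, 0; 0, p, 0, q; q, 0, r, 0; 0, q, 0, r] := by
    ext i j
    obtain ⟨i, rfl⟩ := finSumFinEquiv.surjective i
    obtain ⟨j, rfl⟩ := finSumFinEquiv.surjective j
    rw [Matrix.reindex_apply, Matrix.submatrix_apply, Equiv.symm_apply_apply,
      Equiv.symm_apply_apply]
    rcases i with i | i <;> rcases j with j | j <;> fin_cases i <;> fin_cases j <;>
      simp [finSumFinEquiv]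
  rw [← Matrix.charpoly_reindex finSumFinEquiv, h]
  simp [Matrix.charpoly, Matrix.charmatrix, Matrix.det_succ_row_zero, Fin.sum_univ_succ,
    Fin.succAbove]
  ring

lemma Delta2_mul_self : Delta2 * Delta2 = -1 := by
  ext i j
  fin_cases i <;> fin_cases j <;> simp [Delta2]

lemma Omega2_mul_fromBlocks_sq (a b d : ℝ) :
    (Omega2 * Matrix.fromBlocks (a • (1 : Matrix (Fin 2) (Fin 2) ℝ))
      (b • (1 : Matrix (Fin 2) (Fin 2) ℝ)) (b • (1 : Matrix (Fin 2) (Fin 2) ℝ))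
      (d • (1 : Matrix (Fin 2) (Fin 2) ℝ))) ^ 2
      = Matrix.fromBlocks ((-(a ^ 2 + b ^ 2)) • (1 : Matrix (Fin 2) (Fin 2) ℝ))
        ((-(b * (a + d))) • (1 : Matrix (Fin 2) (Fin 2) ℝ))
        ((-(b * (a + d))) • (1 : Matrix (Fin 2) (Fin 2) ℝ))
        ((-(b ^ 2 + d ^ 2)) • (1 : Matrix (Fin 2) (Fin 2) ℝ)) := by
  rw [sq, Omega2, Matrix.fromBlocks_multiply, Matrix.fromBlocks_multiply]
  simp only [Matrix.mul_smul, Matrix.smul_mul, mul_one, add_zero, zero_add,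
    Delta2_mul_self, smul_neg, smul_zero, smul_smul, ← neg_smul, ← add_smul]
  congr 2 <;> ring

theorem stmt15 (η t : ℝ) (hη0 : 0 ≤ η) (hη1 : η ≤ 1) (ht : 1/2 ≤ t) :
    ((Omega2 * sigmaBE η t) ^ 2).charpoly
      = (X + C (1/4 : ℝ)) ^ 2 * (X + C (((1 - η + 2*t*(1 + η))/4) ^ 2)) ^ 2 := by
  rw [sigmaBE, Omega2_mul_fromBlocks_sq, charpoly_fromBlocks_smul_one, ← mul_pow]
  congr 1
  have hb : (Real.sqrt ((1 - η) * η) * (1 - 2*t) / (2 * Real.sqrt 2)) ^ 2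
      = (1 - η) * η * (1 - 2*t) ^ 2 / 8 := by
    rw [div_pow, mul_pow, mul_pow, Real.sq_sqrt (mul_nonneg (sub_nonneg.2 hη1) hη0),
      Real.sq_sqrt (by norm_num)]
    norm_num
  -- Two polynomials over the infinite field `ℝ` agree once their values do.
  refine Polynomial.funext fun x => ?_
  simp only [eval_sub, eval_mul, eval_add, eval_pow, eval_X, eval_C, neg_sq, mul_pow, hb]
  ring
end
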